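/- For every τ in the complex upper half-plane ℍ, one has Σ_{k≥0, k≡0 (mod 8)} c(k)·q^{k−1} = η(8τ)⁵/η(16τ)⁴ + 32·η(32τ)⁸/(η(8τ)³·η(16τ)⁴). (That is, the part of the Fourier expansion of A(τ) = η(4τ)⁸/η(8τ)⁷ = Σ_{n≥−1} a(n)qⁿ supported on exponents n ≡ 7 (mod 8) equals η(8τ)⁵/η(16τ)⁴ + 32·η(32τ)⁸/(η(8τ)³·η(16τ)⁴).) -/

import Mathlib

noncomputable section
open Complex Real

/-- `q = e^{2πiτ}`. -/
def nome (τ : ℂ) : ℂ := Complex.exp (2 * (π : ℂ) * I * τ)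

/-- Dedekind eta function `η(τ) = e^{πiτ/12} ∏_{n≥1} (1 − qⁿ)`. -/
def dedekindEta (τ : ℂ) : ℂ :=
  Complex.exp ((π : ℂ) * I * τ / 12) * ∏' n : ℕ, (1 - nome τ ^ (n + 1))

def pf (Q : ℂ) (m : ℕ) : ℂ := ∏ k ∈ Finset.range m, (1 - Q ^ (k + 1))

def rf (Q : ℂ) (m : ℤ) : ℂ := if m < 0 then 0 else (pf Q m.toNat)⁻¹

lemma one_sub_pow_ne {Q : ℂ} (h : ‖Q‖ < 1) (k : ℕ) : 1 - Q ^ (k + 1) ≠ 0 := by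
  intro h0
  have h1 : Q ^ (k + 1) = 1 := (sub_eq_zero.mp h0).symm
  have h2 : ‖Q‖ ^ (k + 1) = 1 := by rw [← norm_pow, h1]; simp
  have h3 := pow_lt_one₀ (norm_nonneg Q) h (Nat.succ_ne_zero k)
  simp only [Nat.succ_eq_add_one] at h3
  linarith

lemma pf_ne {Q : ℂ} (h : ‖Q‖ < 1) (m : ℕ) : pf Q m ≠ 0 :=
  Finset.prod_ne_zero_iff.mpr fun k _ => one_sub_pow_ne h k

lemma rf_sub {Q : ℂ} (h : ‖Q‖ < 1) (m : ℤ) : rf Q (m - 1) = (1 - Q ^ m) * rf Q m := by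
  unfold rf
  rcases lt_trichotomy m 0 with hm | hm | hm
  · rw [if_pos hm, if_pos (by omega)]; simp
  · subst hm; simp
  · obtain ⟨n, rfl⟩ : ∃ n : ℕ, m = n + 1 := ⟨(m - 1).toNat, by omega⟩
    rw [if_neg (by omega), if_neg (by omega)]
    have e1 : ((n : ℤ) + 1 - 1).toNat = n := by omega
    have e2 : ((n : ℤ) + 1).toNat = n + 1 := by omega
    rw [e1, e2]
    have e3 : pf Q (n + 1) = pf Q n * (1 - Q ^ (n + 1)) := by
      unfold pf; rw [Finset.prod_range_succ]
    have e4 : Q ^ ((n : ℤ) + 1) = Q ^ (n + 1) := by exact_mod_cast zpow_natCast Q (n + 1)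
    have := one_sub_pow_ne h n
    have := pf_ne h n
    rw [e3, e4]
    field_simp

def af (q : ℂ) (n : ℕ) (j : ℤ) : ℂ :=
  q ^ (j ^ 2) * pf (q ^ 2) (2 * n) * (rf (q ^ 2) (n + j) * rf (q ^ 2) (n - j))

lemma af_rec {q : ℂ} (hq0 : q ≠ 0) (hq : ‖q‖ < 1) (n : ℕ) (j : ℤ) :
    af q (n + 1) j = (1 + q ^ (2 * n + 1) * q ^ (2 * n + 1)) * af q n j
      + q ^ (2 * n + 1) * af q n (j - 1) + q ^ (2 * n + 1) * af q n (j + 1) := by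
  have hQ : ‖q ^ 2‖ < 1 := by
    rw [norm_pow]; exact pow_lt_one₀ (norm_nonneg _) hq (by norm_num)
  have hQ0 : q ^ 2 ≠ 0 := pow_ne_zero _ hq0
  unfold af
  set M : ℤ := n + 1 + j with hM
  set L : ℤ := n + 1 - j with hL
  have p1 : pf (q ^ 2) (2 * (n + 1)) = pf (q ^ 2) (2 * n) * (1 - (q ^ 2) ^ (2 * n + 1)) *
      (1 - (q ^ 2) ^ (2 * n + 2)) := by
    unfold pf; rw [show 2 * (n + 1) = 2 * n + 1 + 1 by ring, Finset.prod_range_succ,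
      Finset.prod_range_succ]
  have r1 := rf_sub hQ M
  have r2 := rf_sub hQ L
  have r3 := rf_sub hQ (M - 1)
  have r4 := rf_sub hQ (L - 1)
  rw [r1] at r3
  rw [r2] at r4
  have i1 : ((n + 1 : ℕ) : ℤ) + j = M := by push_cast; ring
  have i2 : ((n + 1 : ℕ) : ℤ) - j = L := by push_cast; ring
  have i3 : (n : ℤ) + j = M - 1 := by rw [hM]; ring
  have i4 : (n : ℤ) - j = L - 1 := by rw [hL]; ring
  have i5 : (n : ℤ) + (j - 1) = M - 1 - 1 := by rw [hM]; ring
  have i6 : (n : ℤ) - (j - 1) = L := by rw [hL]; ring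
  have i7 : (n : ℤ) + (j + 1) = M := by rw [hM]; ring
  have i8 : (n : ℤ) - (j + 1) = L - 1 - 1 := by rw [hL]; ring
  rw [i1, i2, i3, i4, i5, i6, i7, i8, p1, r3, r4, r1, r2]
  have s1 : (q ^ 2) ^ (M - 1) = (q ^ 2) ^ M * (q ^ 2)⁻¹ := by rw [zpow_sub_one₀ hQ0]
  have s2 : (q ^ 2) ^ (L - 1) = (q ^ 2) ^ L * (q ^ 2)⁻¹ := by rw [zpow_sub_one₀ hQ0]
  have s3 : (q ^ 2) ^ (2 * n + 2) = (q ^ 2) ^ M * (q ^ 2) ^ L := by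
    rw [← zpow_add₀ hQ0, ← zpow_natCast]; congr 1; rw [hM, hL]; push_cast; ring
  have s4 : (q ^ 2) ^ (2 * n + 1) = (q ^ 2) ^ M * (q ^ 2) ^ L * (q ^ 2)⁻¹ := by
    rw [← s3, pow_succ (q ^ 2) (2 * n + 1)]; field_simp
  have s5 : q ^ (2 * n + 1) * q ^ (2 * n + 1) = (q ^ 2) ^ (2 * n + 1) := by
    rw [← pow_mul, ← pow_add]; congr 1; ring
  have z2 : ∀ k : ℤ, (q ^ 2) ^ k = q ^ (2 * k) := fun k => by
    rw [zpow_mul]; norm_cast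
  have s6 : q ^ (2 * n + 1) * q ^ ((j - 1) ^ 2) = q ^ (j ^ 2) * (q ^ 2) ^ L := by
    rw [z2, ← zpow_natCast, ← zpow_add₀ hq0, ← zpow_add₀ hq0]; congr 1; rw [hL]; push_cast; ring
  have s7 : q ^ (2 * n + 1) * q ^ ((j + 1) ^ 2) = q ^ (j ^ 2) * (q ^ 2) ^ M := by
    rw [z2, ← zpow_natCast, ← zpow_add₀ hq0, ← zpow_add₀ hq0]; congr 1; rw [hM]; push_cast; ring
  rw [s5, s3, s4, s1, s2]
  simp only [← mul_assoc]
  rw [s6, s7]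
  generalize (q ^ 2) ^ M = A
  generalize (q ^ 2) ^ L = B
  ring

lemma HasSum.congr_aux {f g : ℤ → ℂ} {a : ℂ} (h : HasSum f a) (e : ∀ j, g j = f j) :
    HasSum g a := by
  rwa [funext e]

lemma finite_jtp {q z : ℂ} (hq0 : q ≠ 0) (hq : ‖q‖ < 1) (hz : z ≠ 0) (n : ℕ) :
    HasSum (fun j : ℤ => af q n j * z ^ j)
      (∏ k ∈ Finset.range n, ((1 + z * q ^ (2 * k + 1)) * (1 + z⁻¹ * q ^ (2 * k + 1)))) := by
  induction n with
  | zero =>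
    have h := hasSum_single (f := fun j : ℤ => af q 0 j * z ^ j) 0 (by
      intro j hj
      rcases lt_or_gt_of_ne hj with h | h
      · simp [af, rf, h]
      · simp [af, rf, h])
    simpa [af, rf, pf] using h
  | succ n ih =>
    rw [Finset.prod_range_succ]
    set F := ∏ k ∈ Finset.range n, ((1 + z * q ^ (2 * k + 1)) * (1 + z⁻¹ * q ^ (2 * k + 1)))
    have h1 := ih.mul_left (1 + q ^ (2 * n + 1) * q ^ (2 * n + 1))
    have h2 := ((Equiv.subRight (1 : ℤ)).hasSum_iff.mpr ih).mul_left (q ^ (2 * n + 1) * z)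
    have h3 := ((Equiv.addRight (1 : ℤ)).hasSum_iff.mpr ih).mul_left (q ^ (2 * n + 1) * z⁻¹)
    have e1 : F * ((1 + z * q ^ (2 * n + 1)) * (1 + z⁻¹ * q ^ (2 * n + 1))) =
        (1 + q ^ (2 * n + 1) * q ^ (2 * n + 1)) * F + q ^ (2 * n + 1) * z * F +
          q ^ (2 * n + 1) * z⁻¹ * F := by
      field_simp
      ring
    rw [e1]
    refine HasSum.congr_aux ((h1.add h2).add h3) fun j => ?_
    simp only [Function.comp, Equiv.subRight_apply, Equiv.coe_addRight]
    rw [af_rec hq0 hq, zpow_sub_one₀ hz, zpow_add_one₀ hz]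
    field_simp

lemma tendsto_pf {Q : ℂ} (h : ‖Q‖ < 1) :
    Filter.Tendsto (pf Q) Filter.atTop (nhds (∏' n : ℕ, (1 - Q ^ (n + 1)))) :=
  (ModularForm.multipliable_one_sub_pow h).hasProd.tendsto_prod_nat

lemma summable_pow {Q : ℂ} (h : ‖Q‖ < 1) : Summable fun n : ℕ => ‖Q ^ (n + 1)‖ := by
  simpa using (summable_nat_add_iff 1).mpr (summable_geometric_of_lt_one (norm_nonneg _) h)

lemma E_ne {Q : ℂ} (h : ‖Q‖ < 1) : (∏' n : ℕ, (1 - Q ^ (n + 1))) ≠ 0 := by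
  have := tprod_one_add_ne_zero_of_summable (f := fun n : ℕ => - Q ^ (n + 1))
    (fun n => by simpa [sub_eq_add_neg] using one_sub_pow_ne h n) (by simpa using summable_pow h)
  simpa [sub_eq_add_neg] using this

lemma rf_bound {Q : ℂ} (h : ‖Q‖ < 1) : ∃ C : ℝ, 0 ≤ C ∧ ∀ m, ‖rf Q m‖ ≤ C := by
  obtain ⟨C, hC⟩ := ((tendsto_pf h).inv₀ (E_ne h)).norm.bddAbove_range
  have hC' : ∀ m : ℕ, ‖(pf Q m)⁻¹‖ ≤ C := fun m => hC ⟨m, rfl⟩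
  have h0 : 0 ≤ C := (norm_nonneg _).trans (hC' 0)
  refine ⟨C, h0, fun m => ?_⟩
  unfold rf
  split_ifs
  · simpa using h0
  · exact hC' _

lemma pf_bound {Q : ℂ} (h : ‖Q‖ < 1) : ∃ C : ℝ, 0 ≤ C ∧ ∀ m, ‖pf Q m‖ ≤ C := by
  obtain ⟨C, hC⟩ := (tendsto_pf h).norm.bddAbove_range
  have hC' : ∀ m : ℕ, ‖pf Q m‖ ≤ C := fun m => hC ⟨m, rfl⟩
  exact ⟨C, (norm_nonneg _).trans (hC' 0), hC'⟩

lemma tendsto_rf {Q : ℂ} (h : ‖Q‖ < 1) (f : ℕ → ℤ)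
    (hf : Filter.Tendsto f Filter.atTop Filter.atTop) :
    Filter.Tendsto (fun n => rf Q (f n)) Filter.atTop
      (nhds (∏' n : ℕ, (1 - Q ^ (n + 1)))⁻¹) := by
  have hg : Filter.Tendsto (fun n => (f n).toNat) Filter.atTop Filter.atTop := by
    rw [Filter.tendsto_atTop] at hf ⊢
    intro b
    filter_upwards [hf b] with n hn
    omega
  have h1 := ((tendsto_pf h).inv₀ (E_ne h)).comp hg
  refine h1.congr' ?_
  filter_upwards [hf.eventually_ge_atTop 0] with n hn
  simp [rf, not_lt.mpr hn]

lemma jtp {q z : ℂ} (hq0 : q ≠ 0) (hq : ‖q‖ < 1) (hz : z ≠ 0)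
    (hs : Summable fun j : ℤ => ‖q ^ (j ^ 2) * z ^ j‖) {P : ℂ}
    (hP : Filter.Tendsto (fun n => ∏ k ∈ Finset.range n,
      ((1 + z * q ^ (2 * k + 1)) * (1 + z⁻¹ * q ^ (2 * k + 1)))) Filter.atTop (nhds P)) :
    ∑' j : ℤ, q ^ (j ^ 2) * z ^ j = (∏' n : ℕ, (1 - (q ^ 2) ^ (n + 1))) * P := by
  have hQ : ‖q ^ 2‖ < 1 := by
    rw [norm_pow]; exact pow_lt_one₀ (norm_nonneg _) hq (by norm_num)
  set E := ∏' n : ℕ, (1 - (q ^ 2) ^ (n + 1)) with hE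
  have hE0 : E ≠ 0 := E_ne hQ
  obtain ⟨C, hC0, hC⟩ := rf_bound hQ
  obtain ⟨D, hD0, hD⟩ := pf_bound hQ
  have key := tendsto_tsum_of_dominated_convergence (𝓕 := Filter.atTop)
    (f := fun (n : ℕ) (j : ℤ) => af q n j * z ^ j)
    (g := fun j : ℤ => E⁻¹ * (q ^ (j ^ 2) * z ^ j))
    (bound := fun j : ℤ => (D * (C * C)) * ‖q ^ (j ^ 2) * z ^ j‖)
    (hs.mul_left _) (by
      intro j
      have t0 : Filter.Tendsto (fun n : ℕ => (n : ℤ)) Filter.atTop Filter.atTop :=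
        tendsto_natCast_atTop_atTop
      have t1 := tendsto_rf hQ (fun n => (n : ℤ) + j)
        (Filter.tendsto_atTop_add_const_right _ _ t0)
      have t2 := tendsto_rf hQ (fun n => (n : ℤ) - j)
        (Filter.tendsto_atTop_add_const_right _ (-j) t0)
      have t3 : Filter.Tendsto (fun n : ℕ => pf (q ^ 2) (2 * n)) Filter.atTop (nhds E) :=
        (tendsto_pf hQ).comp (Filter.tendsto_id.const_mul_atTop' (by norm_num : 0 < 2))
      have t4 := ((t3.const_mul (q ^ (j ^ 2))).mul (t1.mul t2)).mul_const (z ^ j)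
      rw [← hE] at t4
      have t5 : q ^ (j ^ 2) * E * (E⁻¹ * E⁻¹) * z ^ j = E⁻¹ * (q ^ (j ^ 2) * z ^ j) := by
        field_simp
      rw [t5] at t4
      exact t4) (by
      refine Filter.Eventually.of_forall fun n j => ?_
      have : af q n j * z ^ j = (pf (q ^ 2) (2 * n) * (rf (q ^ 2) (n + j) * rf (q ^ 2) (n - j)))
        * (q ^ (j ^ 2) * z ^ j) := by unfold af; ring
      rw [this, norm_mul, norm_mul (pf _ _), norm_mul (rf _ _)]
      gcongr
      · exact hD _
      · exact hC _
      · exact hC _)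
  have key2 : Filter.Tendsto (fun n : ℕ => ∑' j : ℤ, af q n j * z ^ j) Filter.atTop (nhds P) :=
    hP.congr fun n => (finite_jtp hq0 hq hz n).tsum_eq.symm
  have h := tendsto_nhds_unique key key2
  rw [hs.of_norm.tsum_mul_left] at h
  rw [← h]
  field_simp

def Ef (q : ℂ) : ℂ := ∏' n : ℕ, (1 - q ^ (n + 1))
def Af (q : ℂ) : ℂ := ∏' n : ℕ, (1 + q ^ (2 * n + 1))
def Bf (q : ℂ) : ℂ := ∏' n : ℕ, (1 + q ^ (n + 1))
def Ph (q : ℂ) : ℂ := ∑' j : ℤ, q ^ (j ^ 2)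
def Ps (q : ℂ) : ℂ := ∑' j : ℤ, q ^ (j ^ 2 + j)

lemma hasProd_E {q : ℂ} (hq : ‖q‖ < 1) : HasProd (fun n : ℕ => 1 - q ^ (n + 1)) (Ef q) :=
  (ModularForm.multipliable_one_sub_pow hq).hasProd

lemma hasProd_B {q : ℂ} (hq : ‖q‖ < 1) : HasProd (fun n : ℕ => 1 + q ^ (n + 1)) (Bf q) :=
  (multipliable_one_add_of_summable (summable_pow hq)).hasProd

lemma hasProd_A {q : ℂ} (hq : ‖q‖ < 1) : HasProd (fun n : ℕ => 1 + q ^ (2 * n + 1)) (Af q) := by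
  refine (multipliable_one_add_of_summable ?_).hasProd
  have := (summable_pow hq).comp_injective (i := fun n : ℕ => 2 * n)
    (fun a b h => by simpa using h)
  exact this

lemma norm_pow_lt {q : ℂ} (hq : ‖q‖ < 1) {k : ℕ} (hk : k ≠ 0) : ‖q ^ k‖ < 1 := by
  rw [norm_pow]; exact pow_lt_one₀ (norm_nonneg _) hq hk

lemma E_mul_B {q : ℂ} (hq : ‖q‖ < 1) : Ef q * Bf q = Ef (q ^ 2) := by
  have h := (hasProd_E hq).mul (hasProd_B hq)
  have h2 := hasProd_E (norm_pow_lt hq two_ne_zero)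
  refine h.unique ?_
  have e : (fun n : ℕ => (1 - q ^ (n + 1)) * (1 + q ^ (n + 1))) =
      fun n : ℕ => 1 - (q ^ 2) ^ (n + 1) := by
    ext n; rw [← pow_mul, mul_comm 2, pow_mul]; ring
  rw [e]; exact h2

lemma A_mul_B {q : ℂ} (hq : ‖q‖ < 1) : Af q * Bf (q ^ 2) = Bf q := by
  have h2 := hasProd_B (norm_pow_lt hq two_ne_zero)
  refine HasProd.unique ?_ (hasProd_B hq)
  refine HasProd.even_mul_odd (hasProd_A hq) ?_
  have e : (fun n : ℕ => (1 + q ^ (2 * n + 1 + 1))) =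
      fun n : ℕ => 1 + (q ^ 2) ^ (n + 1) := by
    ext n; rw [← pow_mul]; ring
  rw [e]; exact h2

lemma A_neg_mul_E {q : ℂ} (hq : ‖q‖ < 1) : Af (-q) * Ef (q ^ 2) = Ef q := by
  have h2 := hasProd_E (norm_pow_lt hq two_ne_zero)
  have h1 := hasProd_A (q := -q) (by simpa using hq)
  refine HasProd.unique ?_ (hasProd_E hq)
  have e1 : (fun n : ℕ => 1 + (-q) ^ (2 * n + 1)) = fun n : ℕ => 1 - q ^ (2 * n + 1) := by
    ext n; rw [Odd.neg_pow ⟨n, rfl⟩]; ring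
  rw [e1] at h1
  refine HasProd.even_mul_odd h1 ?_
  have e : (fun n : ℕ => (1 - q ^ (2 * n + 1 + 1))) =
      fun n : ℕ => 1 - (q ^ 2) ^ (n + 1) := by
    ext n; rw [← pow_mul]; ring
  rw [e]; exact h2

lemma summable_sq {q : ℂ} (hq0 : q ≠ 0) (hq : ‖q‖ < 1) :
    Summable fun j : ℤ => ‖q ^ (j ^ 2)‖ := by
  have hg := summable_geometric_of_lt_one (norm_nonneg _) hq
  have key : ∀ (j : ℤ) (n : ℕ), (n : ℤ) ≤ j ^ 2 → ‖q ^ (j ^ 2)‖ ≤ ‖q‖ ^ n := by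
    intro j n h
    rw [norm_zpow, ← zpow_natCast]
    exact zpow_le_zpow_right_of_le_one₀ (norm_pos_iff.mpr hq0) hq.le h
  apply Summable.of_nat_of_neg_add_one
  · exact hg.of_nonneg_of_le (fun n => norm_nonneg _) fun n => key _ _ (by nlinarith)
  · exact hg.of_nonneg_of_le (fun n => norm_nonneg _) fun n => key _ _ (by nlinarith)

lemma summable_sq_add {q : ℂ} (hq0 : q ≠ 0) (hq : ‖q‖ < 1) :
    Summable fun j : ℤ => ‖q ^ (j ^ 2 + j)‖ := by
  have hg := summable_geometric_of_lt_one (norm_nonneg _) hq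
  have key : ∀ (j : ℤ) (n : ℕ), (n : ℤ) ≤ j ^ 2 + j → ‖q ^ (j ^ 2 + j)‖ ≤ ‖q‖ ^ n := by
    intro j n h
    rw [norm_zpow, ← zpow_natCast]
    exact zpow_le_zpow_right_of_le_one₀ (norm_pos_iff.mpr hq0) hq.le h
  apply Summable.of_nat_of_neg_add_one
  · exact hg.of_nonneg_of_le (fun n => norm_nonneg _) fun n => key _ _ (by nlinarith)
  · exact hg.of_nonneg_of_le (fun n => norm_nonneg _) fun n => key _ _ (by nlinarith)

lemma Ph_prod {q : ℂ} (hq0 : q ≠ 0) (hq : ‖q‖ < 1) : Ph q = Ef (q ^ 2) * Af q ^ 2 := by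
  have hA := (hasProd_A hq).mul (hasProd_A hq)
  have h := jtp hq0 hq one_ne_zero (by simpa using summable_sq hq0 hq) (P := Af q * Af q)
    (by simpa using hA.tendsto_prod_nat)
  unfold Ph Ef
  simpa [sq (Af q)] using h

lemma Ps_prod {q : ℂ} (hq0 : q ≠ 0) (hq : ‖q‖ < 1) :
    Ps q = Ef (q ^ 2) * (2 * Bf (q ^ 2) ^ 2) := by
  have hQ := norm_pow_lt hq two_ne_zero
  have hB := hasProd_B hQ
  have hB2 : HasProd (fun n : ℕ => 1 + (q ^ 2) ^ n) (2 * Bf (q ^ 2)) := by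
    have := HasProd.zero_mul (f := fun n : ℕ => 1 + (q ^ 2) ^ n) hB
    convert this using 2
    norm_num
  have e : ∀ j : ℤ, q ^ (j ^ 2) * q ^ j = q ^ (j ^ 2 + j) := fun j => (zpow_add₀ hq0 _ _).symm
  have h := jtp hq0 hq hq0 (by simpa only [e] using summable_sq_add hq0 hq)
    (P := Bf (q ^ 2) * (2 * Bf (q ^ 2))) (by
      refine (hB.mul hB2).tendsto_prod_nat.congr fun n => Finset.prod_congr rfl fun k _ => ?_
      have e1 : q * q ^ (2 * k + 1) = (q ^ 2) ^ (k + 1) := by ring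
      have e2 : q⁻¹ * q ^ (2 * k + 1) = (q ^ 2) ^ k := by
        rw [pow_succ, ← pow_mul]; field_simp
      rw [e1, e2])
  simp only [e] at h
  unfold Ps
  rw [h]
  unfold Ef
  ring

lemma Ef_ne {q : ℂ} (hq : ‖q‖ < 1) : Ef q ≠ 0 := E_ne hq

lemma Ph_neg {q : ℂ} (hq0 : q ≠ 0) (hq : ‖q‖ < 1) : Ph (-q) = Ef q ^ 2 / Ef (q ^ 2) := by
  have := Ef_ne (norm_pow_lt hq two_ne_zero)
  rw [Ph_prod (neg_ne_zero.mpr hq0) (by simpa using hq), ← A_neg_mul_E hq, neg_sq]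
  field_simp

lemma Ps_eq {q : ℂ} (hq0 : q ≠ 0) (hq : ‖q‖ < 1) : Ps q = 2 * Ef (q ^ 4) ^ 2 / Ef (q ^ 2) := by
  have := Ef_ne (norm_pow_lt hq two_ne_zero)
  have h := E_mul_B (norm_pow_lt hq two_ne_zero)
  rw [← pow_mul] at h
  norm_num at h
  rw [Ps_prod hq0 hq, ← h]
  field_simp

lemma Ph_eq {q : ℂ} (hq0 : q ≠ 0) (hq : ‖q‖ < 1) :
    Ph q = Ef (q ^ 2) ^ 5 / (Ef q ^ 2 * Ef (q ^ 4) ^ 2) := by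
  have n1 := Ef_ne hq
  have n2 := Ef_ne (norm_pow_lt hq two_ne_zero)
  have n4 := Ef_ne (norm_pow_lt hq four_ne_zero)
  have h := E_mul_B (norm_pow_lt hq two_ne_zero)
  have h1 := E_mul_B hq
  have h2 := A_mul_B hq
  rw [← pow_mul] at h
  norm_num at h
  have hA : Af q = Ef (q ^ 2) ^ 2 / (Ef q * Ef (q ^ 4)) := by
    rw [eq_div_iff (mul_ne_zero n1 n4), ← h]
    linear_combination (Ef q * Ef (q ^ 2)) * h2 + Ef (q ^ 2) * h1
  rw [Ph_prod hq0 hq, hA]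
  field_simp

lemma Ph_add {q : ℂ} (hq0 : q ≠ 0) (hq : ‖q‖ < 1) : Ph q + Ph (-q) = 2 * Ph (q ^ 4) := by
  have s1 := (summable_sq hq0 hq).of_norm
  have s2 := (summable_sq (neg_ne_zero.mpr hq0) (by simpa using hq)).of_norm
  have s3 := (summable_sq (pow_ne_zero 4 hq0) (norm_pow_lt hq four_ne_zero)).of_norm
  unfold Ph
  rw [← s1.tsum_add s2, ← s3.tsum_mul_left]
  rw [← Function.Injective.tsum_eq (g := fun m : ℤ => 2 * m) (fun a b h => by simpa using h)]
  · refine tsum_congr fun m => ?_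
    have e : (2 * m) ^ 2 = 4 * m ^ 2 := by ring
    have hev : Even (4 * m ^ 2) := ⟨2 * m ^ 2, by ring⟩
    simp only [e]
    rw [hev.neg_zpow, zpow_mul]
    norm_cast
    ring
  · intro j hj
    by_contra hn
    have hodd : Odd j := by
      rw [← Int.not_even_iff_odd]
      rintro ⟨m, rfl⟩
      exact hn ⟨m, by ring⟩
    apply hj
    simp [(hodd.pow (n := 2)).neg_zpow]

lemma Ph_sub {q : ℂ} (hq0 : q ≠ 0) (hq : ‖q‖ < 1) : Ph q - Ph (-q) = 2 * q * Ps (q ^ 4) := by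
  have s1 := (summable_sq hq0 hq).of_norm
  have s2 := (summable_sq (neg_ne_zero.mpr hq0) (by simpa using hq)).of_norm
  have s3 := (summable_sq_add (pow_ne_zero 4 hq0) (norm_pow_lt hq four_ne_zero)).of_norm
  unfold Ph Ps
  rw [← s1.tsum_sub s2, ← s3.tsum_mul_left]
  rw [← Function.Injective.tsum_eq (g := fun m : ℤ => 2 * m + 1) (fun a b h => by simpa using h)]
  · refine tsum_congr fun m => ?_
    have e : (2 * m + 1) ^ 2 = 4 * (m ^ 2 + m) + 1 := by ring
    have hodd : Odd (4 * (m ^ 2 + m) + 1) := ⟨2 * (m ^ 2 + m), by ring⟩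
    simp only [e]
    rw [hodd.neg_zpow, zpow_add_one₀ hq0, zpow_mul]
    norm_cast
    ring
  · intro j hj
    by_contra hn
    have hev : Even j := by
      rw [← Int.not_odd_iff_even]
      rintro ⟨m, rfl⟩
      exact hn ⟨m, by ring⟩
    apply hj
    have : Even (j ^ 2) := hev.pow_of_ne_zero (by norm_num)
    simp [this.neg_zpow]

lemma Ph_mul_neg {q : ℂ} (hq0 : q ≠ 0) (hq : ‖q‖ < 1) : Ph q * Ph (-q) = Ph (-q ^ 2) ^ 2 := by
  have n1 := Ef_ne hq
  have n2 := Ef_ne (norm_pow_lt hq two_ne_zero)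
  have n4 := Ef_ne (norm_pow_lt hq four_ne_zero)
  rw [Ph_neg hq0 hq, Ph_eq hq0 hq, Ph_neg (pow_ne_zero 2 hq0) (norm_pow_lt hq two_ne_zero),
    ← pow_mul]
  norm_num
  field_simp

lemma Ph_mul_Ps {q : ℂ} (hq0 : q ≠ 0) (hq : ‖q‖ < 1) :
    Ph (q ^ 2) * Ps (q ^ 2) = Ps q ^ 2 / 2 := by
  have n2 := Ef_ne (norm_pow_lt hq two_ne_zero)
  have n4 := Ef_ne (norm_pow_lt hq four_ne_zero)
  have n8 := Ef_ne (norm_pow_lt hq (show 8 ≠ 0 by norm_num))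
  have hQ := norm_pow_lt hq two_ne_zero
  rw [Ph_eq (pow_ne_zero 2 hq0) hQ, Ps_eq (pow_ne_zero 2 hq0) hQ, Ps_eq hq0 hq,
    ← pow_mul, ← pow_mul]
  norm_num
  field_simp

lemma Ph_sq_sub {q : ℂ} (hq0 : q ≠ 0) (hq : ‖q‖ < 1) :
    Ph q ^ 2 - Ph (-q) ^ 2 = 2 * q * Ps (q ^ 2) ^ 2 := by
  have a := Ph_add hq0 hq
  have b := Ph_sub hq0 hq
  have c := Ph_mul_Ps (pow_ne_zero 2 hq0) (norm_pow_lt hq two_ne_zero)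
  rw [← pow_mul] at c
  norm_num at c
  linear_combination (Ph q - Ph (-q)) * a + 2 * Ph (q ^ 4) * b + 4 * q * c

lemma Ph_sq_add {t : ℂ} (ht0 : t ≠ 0) (ht : ‖t‖ < 1) :
    Ph (t ^ 2) ^ 2 + Ph (-t ^ 2) ^ 2 = 2 * Ph (t ^ 4) ^ 2 := by
  have a := Ph_add ht0 ht
  have b := Ph_sub ht0 ht
  have d := Ph_mul_neg ht0 ht
  have e := Ph_sq_sub (pow_ne_zero 2 ht0) (norm_pow_lt ht two_ne_zero)
  rw [← pow_mul] at e
  norm_num at e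
  have a2 := congrArg (· ^ 2) a
  have b2 := congrArg (· ^ 2) b
  linear_combination (1 / 2) * a2 - (1 / 2) * b2 - 2 * d + e

lemma Ph_four {x t : ℂ} (hx : x = t ^ 2) (ht0 : t ≠ 0) (ht : ‖t‖ < 1) :
    Ph x ^ 4 + Ph (-x) ^ 4 = 2 * Ph (-x ^ 2) ^ 4 + 4 * x ^ 2 * Ps (x ^ 2) ^ 4 := by
  have hx0 : x ≠ 0 := hx ▸ pow_ne_zero 2 ht0
  have hx1 : ‖x‖ < 1 := hx ▸ norm_pow_lt ht two_ne_zero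
  have p := Ph_sq_add ht0 ht
  have p2 := Ph_sq_add hx0 hx1
  have d := Ph_mul_neg hx0 hx1
  have s := Ph_sq_sub (pow_ne_zero 2 hx0) (norm_pow_lt hx1 two_ne_zero)
  have r := Ph_mul_Ps (pow_ne_zero 2 hx0) (norm_pow_lt hx1 two_ne_zero)
  rw [show t ^ 4 = x ^ 2 by rw [hx]; ring, ← hx] at p
  rw [← pow_mul] at s r
  norm_num at s r
  have pp := congrArg (· ^ 2) p
  have dd := congrArg (· ^ 2) d
  have rr := congrArg (· ^ 2) r
  linear_combination pp - 2 * dd + 4 * (Ph (x ^ 2) ^ 2 + Ph (-x ^ 2) ^ 2) * s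
    + 8 * x ^ 2 * Ps (x ^ 4) ^ 2 * p2 + 16 * x ^ 2 * rr

lemma core {x t : ℂ} (hx : x = t ^ 2) (ht0 : t ≠ 0) (ht : ‖t‖ < 1) :
    Ef x ^ 8 + Ef (-x) ^ 8 = 2 * (Ef (x ^ 2) ^ 12 / Ef (x ^ 4) ^ 4 +
      32 * x ^ 2 * Ef (x ^ 2) ^ 4 * Ef (x ^ 8) ^ 8 / Ef (x ^ 4) ^ 4) := by
  have hx0 : x ≠ 0 := hx ▸ pow_ne_zero 2 ht0
  have hx1 : ‖x‖ < 1 := hx ▸ norm_pow_lt ht two_ne_zero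
  have h2 := norm_pow_lt hx1 two_ne_zero
  have n2 := Ef_ne h2
  have n4 := Ef_ne (norm_pow_lt hx1 four_ne_zero)
  have h := Ph_four hx ht0 ht
  have f1 := Ph_neg hx0 hx1
  have f2 := Ph_neg (neg_ne_zero.mpr hx0) (by simpa using hx1)
  have f3 := Ph_neg (pow_ne_zero 2 hx0) h2
  have f4 := Ps_eq (pow_ne_zero 2 hx0) h2
  rw [neg_neg, neg_sq] at f2
  rw [← pow_mul] at f3 f4
  rw [← pow_mul] at f4
  norm_num at f3 f4
  rw [f1, f2, f3, f4] at h
  field_simp at h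
  field_simp
  linear_combination h

lemma nome_mul (n : ℕ) (τ : ℂ) : nome (n * τ) = nome τ ^ n := by
  unfold nome; rw [← Complex.exp_nat_mul]; congr 1; ring

lemma norm_nome {τ : ℂ} (h : 0 < τ.im) : ‖nome τ‖ < 1 := by
  unfold nome
  rw [Complex.norm_exp, Real.exp_lt_one_iff]
  simp
  positivity

lemma nome_ne (τ : ℂ) : nome τ ≠ 0 := Complex.exp_ne_zero _

/-- the elementary factor `e^{πiτ/12}` -/
def ef (τ : ℂ) : ℂ := Complex.exp ((π : ℂ) * I * τ / 12)

lemma eta_mul (n : ℕ) (τ : ℂ) : dedekindEta (n * τ) = ef τ ^ n * Ef (nome τ ^ n) := by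
  unfold dedekindEta Ef ef
  rw [nome_mul, ← Complex.exp_nat_mul]
  congr 2; ring

lemma ef_ne (τ : ℂ) : ef τ ≠ 0 := Complex.exp_ne_zero _

lemma ef_pow (τ : ℂ) : ef τ ^ 24 = nome τ := by
  unfold ef nome
  rw [← Complex.exp_nat_mul]; congr 1; push_cast; ring

lemma gen_eq {τ : ℂ} (h : 0 < τ.im) :
    nome τ * (dedekindEta (4 * τ) ^ 8 / dedekindEta (8 * τ) ^ 7) =
      Ef (nome τ ^ 4) ^ 8 / Ef (nome τ ^ 8) ^ 7 := by
  have h4 := eta_mul 4 τ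
  have h8 := eta_mul 8 τ
  push_cast at h4 h8
  have n8 := Ef_ne (norm_pow_lt (norm_nome h) (show 8 ≠ 0 by norm_num))
  have := ef_ne τ
  rw [h4, h8]
  nth_rewrite 1 [← ef_pow]
  field_simp

lemma section_sum {w ζ : ℂ} {c : ℕ → ℤ} {G : ℂ → ℂ} (hζ : IsPrimitiveRoot ζ 8)
    (h : ∀ j : ℕ, HasSum (fun k : ℕ => (c k : ℂ) * (ζ ^ j * w) ^ k) (G (ζ ^ j * w))) :
    HasSum (fun k : ℕ => 8 * ((if k % 8 = 0 then (c k : ℂ) else 0) * w ^ k))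
      (∑ j ∈ Finset.range 8, G (ζ ^ j * w)) := by
  have hs := hasSum_sum (s := Finset.range 8) (fun j _ => h j)
  have e : (fun k : ℕ => 8 * ((if k % 8 = 0 then (c k : ℂ) else 0) * w ^ k)) =
      fun k : ℕ => ∑ j ∈ Finset.range 8, (c k : ℂ) * (ζ ^ j * w) ^ k := by
    ext k
    have e1 : ∀ j, (c k : ℂ) * (ζ ^ j * w) ^ k = c k * w ^ k * (ζ ^ k) ^ j := fun j => by
      rw [mul_pow, ← pow_mul, ← pow_mul, mul_comm j k]; ring
    simp only [e1]
    rw [← Finset.mul_sum]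
    split_ifs with hk
    · have : ζ ^ k = 1 := (hζ.pow_eq_one_iff_dvd k).mpr (Nat.dvd_of_mod_eq_zero hk)
      simp [this]; ring
    · have hne : ζ ^ k ≠ 1 := fun h1 =>
        hk (Nat.mod_eq_zero_of_dvd ((hζ.pow_eq_one_iff_dvd k).mp h1))
      have h0 : (∑ j ∈ Finset.range 8, (ζ ^ k) ^ j) = 0 := by
        have hg := geom_sum_mul (ζ ^ k) 8
        have h8 : (ζ ^ k) ^ 8 = 1 := by rw [← pow_mul, mul_comm, pow_mul, hζ.pow_eq_one, one_pow]
        rw [h8, sub_self] at hg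
        exact (mul_eq_zero.mp hg).resolve_right (sub_ne_zero.mpr hne)
      rw [h0]; simp
  rw [e]; exact hs

/-- let `c : ℕ → ℤ` be the coefficient sequence of the formal power series
`∏(1−X^{4n})⁸/∏(1−X^{8n})⁷`, characterized by `η(4τ)⁸/η(8τ)⁷ = Σ_{k≥0} c(k) q^{k−1}` on ℍ.
Then `Σ_{k≥0, k≡0 (8)} c(k) q^{k−1} = η(8τ)⁵/η(16τ)⁴ + 32 η(32τ)⁸/(η(8τ)³η(16τ)⁴)`. -/
theorem stmt7 (c : ℕ → ℤ)
    (hc : ∀ τ : ℂ, 0 < τ.im →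
      HasSum (fun k : ℕ => (c k : ℂ) * nome τ ^ k)
        (nome τ * (dedekindEta (4 * τ) ^ 8 / dedekindEta (8 * τ) ^ 7)))
    (τ : ℂ) (hτ : 0 < τ.im) :
    (nome τ)⁻¹ * ∑' k : ℕ, (if k % 8 = 0 then (c k : ℂ) else 0) * nome τ ^ k =
      dedekindEta (8 * τ) ^ 5 / dedekindEta (16 * τ) ^ 4 +
        32 * dedekindEta (32 * τ) ^ 8 /
          (dedekindEta (8 * τ) ^ 3 * dedekindEta (16 * τ) ^ 4) := by
  set ζ : ℂ := Complex.exp (2 * π * I / (8 : ℕ)) with hζd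
  have hζ : IsPrimitiveRoot ζ 8 := Complex.isPrimitiveRoot_exp 8 (by norm_num)
  have hζ4 : ζ ^ 4 = -1 := by
    rw [hζd, ← Complex.exp_nat_mul, ← Complex.exp_pi_mul_I]; congr 1; push_cast; ring
  have hw0 := nome_ne τ
  have hw1 := norm_nome hτ
  have hsec := section_sum (w := nome τ) (c := c)
    (G := fun w => Ef (w ^ 4) ^ 8 / Ef (w ^ 8) ^ 7) hζ (fun j => by
      have him : 0 < (τ + j / 8).im := by
        have : ((j : ℂ) / 8).im = 0 := by
          rw [show (j : ℂ) / 8 = ((j / 8 : ℝ) : ℂ) by push_cast; rfl, Complex.ofReal_im]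
        rw [Complex.add_im, this]; simpa using hτ
      have h := hc (τ + j / 8) him
      rw [gen_eq him] at h
      have e : nome (τ + j / 8) = ζ ^ j * nome τ := by
        rw [hζd, ← Complex.exp_nat_mul]
        unfold nome
        rw [← Complex.exp_add]; congr 1; push_cast; ring
      rw [e] at h
      exact h)
  have hsum := hsec.tsum_eq
  rw [tsum_mul_left] at hsum
  generalize hS : (∑' k : ℕ, (if k % 8 = 0 then (c k : ℂ) else 0) * nome τ ^ k) = S at hsum ⊢
  set w := nome τ with hw
  have m1 : ∀ j, (ζ ^ j * w) ^ 4 = (-1) ^ j * w ^ 4 := fun j => by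
    rw [mul_pow, ← pow_mul, mul_comm j, pow_mul, hζ4]
  have m2 : ∀ j, (ζ ^ j * w) ^ 8 = w ^ 8 := fun j => by
    rw [mul_pow, ← pow_mul, mul_comm j, pow_mul, hζ.pow_eq_one, one_pow, one_mul]
  simp only [m1, m2, Finset.sum_range_succ, Finset.sum_range_zero] at hsum
  norm_num at hsum
  have hcore := core (x := w ^ 4) (t := w ^ 2) (by ring) (pow_ne_zero 2 hw0)
    (norm_pow_lt hw1 two_ne_zero)
  simp only [← pow_mul] at hcore
  norm_num at hcore
  have n8 := Ef_ne (norm_pow_lt hw1 (show 8 ≠ 0 by norm_num))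
  have n16 := Ef_ne (norm_pow_lt hw1 (show 16 ≠ 0 by norm_num))
  have h8 := eta_mul 8 τ
  have h16 := eta_mul 16 τ
  have h32 := eta_mul 32 τ
  push_cast at h8 h16 h32
  rw [← hw] at h8 h16 h32
  have hval : S =
      (Ef (w ^ 4) ^ 8 + Ef (-w ^ 4) ^ 8) / (2 * Ef (w ^ 8) ^ 7) := by
    field_simp at hsum ⊢
    linear_combination (1 / 4) * hsum
  have he := ef_ne τ
  have hew : w = ef τ ^ 24 := (ef_pow τ).symm
  have r1 : dedekindEta (8 * τ) ^ 5 / dedekindEta (16 * τ) ^ 4 =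
      w⁻¹ * (Ef (w ^ 8) ^ 5 / Ef (w ^ 16) ^ 4) := by
    rw [h8, h16]
    generalize Ef (w ^ 8) = a at *
    generalize Ef (w ^ 16) = b at *
    rw [hew]
    field_simp
  have r2 : 32 * dedekindEta (32 * τ) ^ 8 / (dedekindEta (8 * τ) ^ 3 * dedekindEta (16 * τ) ^ 4) =
      w⁻¹ * (w ^ 8 * (32 * Ef (w ^ 32) ^ 8 / (Ef (w ^ 8) ^ 3 * Ef (w ^ 16) ^ 4))) := by
    rw [h8, h16, h32]
    generalize Ef (w ^ 8) = a at *
    generalize Ef (w ^ 16) = b at *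
    generalize Ef (w ^ 32) = d at *
    rw [hew]
    field_simp
  rw [r1, r2, hval, hcore, ← mul_add]
  congr 1
  field_simp
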